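/- Let K ≥ 1, let r_1, …, r_K be real numbers, and let γ > 0 and τ > 0. Define the distribution D over {1, …, K} by D(k) = σ(γ r_k) · exp(r_k/τ) / Σ_{j=1}^K σ(γ r_j) · exp(r_j/τ), where σ(t) = 1/(1 + exp(−t)) is the sigmoid function. Let r_max = max_{1 ≤ k ≤ K} r_k. Then r_max − Σ_{k=1}^K D(k) · r_k ≤ τ · log K. -/

import Mathlib

/-!
Write `s k = sigmoid (γ * r k)`, `M = max r = r m`, and `Z` for the normalizing sum. By Jensen's
inequality for the exponential,
`exp (∑ D k * ((M - r k) / τ)) ≤ ∑ D k * exp ((M - r k) / τ) = (∑ s k) * exp (M / τ) / Z`,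
since the factor `exp (r k / τ)` in `D k` cancels. As the sigmoid is increasing, the maximal margin
also has the maximal `s k`, so `s k * exp (M / τ) ≤ s m * exp (M / τ) ≤ Z`, the last step because
the middle term is one of the summands of `Z`. Each of the `K` terms is therefore at
most `1`, so the sum is at most `K`; taking logarithms gives the bound.
-/

noncomputable def sigmoid (t : ℝ) : ℝ := 1 / (1 + Real.exp (-t))

lemma sigmoid_pos (t : ℝ) : 0 < sigmoid t := by
  unfold sigmoid; positivity

lemma sigmoid_mono {a b : ℝ} (h : a ≤ b) : sigmoid a ≤ sigmoid b := by
  unfold sigmoid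
  gcongr

theorem anchor_distribution_near_optimality
    (K : ℕ) (hK : 1 ≤ K) (hne : (Finset.univ : Finset (Fin K)).Nonempty)
    (r : Fin K → ℝ) (γ τ : ℝ) (hγ : 0 < γ) (hτ : 0 < τ)
    (D : Fin K → ℝ)
    (hD : ∀ k, D k = sigmoid (γ * r k) * Real.exp (r k / τ) /
      ∑ j, sigmoid (γ * r j) * Real.exp (r j / τ)) :
    Finset.univ.sup' hne r - ∑ k, D k * r k ≤ τ * Real.log K := by
  obtain ⟨m, -, hm⟩ := Finset.exists_mem_eq_sup' hne r
  have hmax : ∀ k, r k ≤ r m := fun k => hm ▸ Finset.le_sup' r (Finset.mem_univ k)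
  rw [hm]
  set Z := ∑ j, sigmoid (γ * r j) * Real.exp (r j / τ) with hZ
  have hw : ∀ k, 0 < sigmoid (γ * r k) * Real.exp (r k / τ) := fun k =>
    mul_pos (sigmoid_pos _) (Real.exp_pos _)
  have hZpos : 0 < Z := Finset.sum_pos (fun k _ => hw k) hne
  have hZm : sigmoid (γ * r m) * Real.exp (r m / τ) ≤ Z :=
    Finset.single_le_sum (f := fun k => sigmoid (γ * r k) * Real.exp (r k / τ))
      (fun k _ => (hw k).le) (Finset.mem_univ m)
  have hD0 : ∀ k, 0 ≤ D k := fun k => by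
    rw [hD]; exact div_nonneg (hw k).le hZpos.le
  have hD1 : ∑ k, D k = 1 := by
    simp_rw [hD]
    rw [← Finset.sum_div, ← hZ, div_self hZpos.ne']
  have hJensen : Real.exp (∑ k, D k * ((r m - r k) / τ)) ≤
      ∑ k, D k * Real.exp ((r m - r k) / τ) := by
    simpa only [smul_eq_mul] using convexOn_exp.map_sum_le (t := Finset.univ) (w := D)
      (p := fun k => (r m - r k) / τ) (fun k _ => hD0 k) hD1 (fun k _ => Set.mem_univ _)
  have hterm : ∀ k, D k * Real.exp ((r m - r k) / τ) ≤ 1 := fun k => by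
    have hexp : Real.exp (r k / τ) * Real.exp ((r m - r k) / τ) = Real.exp (r m / τ) := by
      rw [← Real.exp_add]; congr 1; ring
    rw [hD, div_mul_eq_mul_div, mul_assoc, hexp, div_le_one hZpos]
    refine le_trans ?_ hZm
    gcongr
    exact sigmoid_mono (mul_le_mul_of_nonneg_left (hmax k) hγ.le)
  have hsum : ∑ k, D k * Real.exp ((r m - r k) / τ) ≤ K := by
    simpa using Finset.sum_le_sum fun k (_ : k ∈ Finset.univ) => hterm k
  have hgap : ∑ k, D k * ((r m - r k) / τ) = (r m - ∑ k, D k * r k) / τ := by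
    have hsplit : ∀ k, D k * ((r m - r k) / τ) = (D k * r m - D k * r k) / τ := fun k => by ring
    simp_rw [hsplit]
    rw [← Finset.sum_div, Finset.sum_sub_distrib, ← Finset.sum_mul, hD1, one_mul]
  have hlog : (r m - ∑ k, D k * r k) / τ ≤ Real.log K := by
    rw [← hgap, Real.le_log_iff_exp_le (by exact_mod_cast hK)]
    exact hJensen.trans hsum
  rwa [div_le_iff₀' hτ] at hlog
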